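/- There exist real numbers 0 < p < q and δ > 0 such that h₀(x) < −δ for every x in the open interval (−q, −p). In particular, the function h₀ takes strictly negative values on a nonempty open interval of negative reals. -/

import Mathlib

/-- The entire function `h₀(x) = ∑_{n≥0} xⁿ/(n!)²`. -/
noncomputable def h₀ (x : ℝ) : ℝ := ∑' n : ℕ, x ^ n / (n.factorial : ℝ) ^ 2

/-! For `t ≥ 0` the series of `h₀ (-t)` alternates in sign, and its terms decrease in absolute value
from index `N` on as soon as `t ≤ (N + 1)²`. So cutting it after an odd number `N` of terms drops a
nonpositive tail; `N = 5` gives `h₀ (-t) ≤ (1 - t/2)² - t³/36 * (1 - t/16)`, where for `t` slightly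
above `2` the square is small and the other term is not. -/

lemma summable_pow_div_factorial_sq (x : ℝ) :
    Summable fun n : ℕ ↦ x ^ n / (n.factorial : ℝ) ^ 2 := by
  refine (Real.summable_pow_div_factorial x).norm.of_norm_bounded fun n ↦ ?_
  have hfact : (1 : ℝ) ≤ n.factorial := mod_cast n.factorial_pos
  rw [norm_div, norm_div, norm_pow (n.factorial : ℝ), Real.norm_natCast]
  gcongr
  exact le_self_pow₀ hfact two_ne_zero

lemma antitone_pow_div_factorial_sq {t : ℝ} {N : ℕ} (ht : 0 ≤ t) (htN : t ≤ (N + 1) ^ 2) :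
    Antitone fun n : ℕ ↦ t ^ (n + N) / ((n + N).factorial : ℝ) ^ 2 := by
  refine antitone_nat_of_succ_le fun n ↦ ?_
  have hratio : t / ((n + N : ℕ) + 1 : ℝ) ^ 2 ≤ 1 := by
    refine div_le_one_of_le₀ (htN.trans ?_) (by positivity)
    gcongr
    exact Nat.le_add_left N n
  calc t ^ (n + 1 + N) / ((n + 1 + N).factorial : ℝ) ^ 2
      = t ^ (n + N) / ((n + N).factorial : ℝ) ^ 2 * (t / ((n + N : ℕ) + 1 : ℝ) ^ 2) := by
        rw [add_right_comm, pow_succ, Nat.factorial_succ, Nat.cast_mul, Nat.cast_succ, mul_pow,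
          mul_comm (_ ^ 2 : ℝ) (_ ^ 2), mul_div_mul_comm]
    _ ≤ t ^ (n + N) / ((n + N).factorial : ℝ) ^ 2 :=
        mul_le_of_le_one_right (by positivity) hratio

lemma h₀_neg_le_sum_range {t : ℝ} {N : ℕ} (hN : Odd N) (ht : 0 ≤ t) (htN : t ≤ (N + 1) ^ 2) :
    h₀ (-t) ≤ ∑ n ∈ Finset.range N, (-t) ^ n / (n.factorial : ℝ) ^ 2 := by
  set a : ℕ → ℝ := fun n ↦ t ^ (n + N) / ((n + N).factorial : ℝ) ^ 2
  have hterm (n : ℕ) :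
      (-t) ^ (n + N) / ((n + N).factorial : ℝ) ^ 2 = -((-1) ^ n * a n) := by
    rw [neg_pow, pow_add, hN.neg_one_pow, mul_neg_one, neg_mul, neg_div, mul_div_assoc]
  have htail : Summable fun n ↦ (-1) ^ n * a n := by
    simpa only [hterm, summable_neg_iff] using
      (summable_nat_add_iff N).2 (summable_pow_div_factorial_sq (-t))
  have htail_nonneg : 0 ≤ ∑' n, (-1) ^ n * a n :=
    (antitone_pow_div_factorial_sq ht htN).alternating_series_le_tendsto
      htail.hasSum.tendsto_sum_nat 0
  rw [h₀, ← (summable_pow_div_factorial_sq (-t)).sum_add_tsum_nat_add N]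
  simpa only [hterm, tsum_neg, add_le_iff_nonpos_right, neg_nonpos] using htail_nonneg

/-- `h₀` is bounded away from `0` by a negative constant on some open interval
`(−q, −p)` of negative reals. -/
theorem stmt_2 : ∃ p q δ : ℝ, 0 < p ∧ p < q ∧ 0 < δ ∧
    ∀ x ∈ Set.Ioo (-q) (-p), h₀ x < -δ := by
  refine ⟨2, 5 / 2, 1 / 10, by norm_num, by norm_num, by norm_num, ?_⟩
  rintro x ⟨hlo, hhi⟩
  obtain ⟨t, rfl⟩ : ∃ t, x = -t := ⟨-x, (neg_neg x).symm⟩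
  have ht₂ : 2 < t := neg_lt_neg_iff.1 hhi
  have ht₅ : t < 5 / 2 := neg_lt_neg_iff.1 hlo
  calc h₀ (-t)
      ≤ ∑ n ∈ Finset.range 5, (-t) ^ n / (n.factorial : ℝ) ^ 2 :=
        h₀_neg_le_sum_range (by decide) (by linarith) (by norm_num; linarith)
    _ = (1 - t / 2) ^ 2 - t ^ 3 / 36 * (1 - t / 16) := by
        norm_num [Finset.sum_range_succ, Nat.factorial]
        ring
    _ ≤ (1 / 4) ^ 2 - 2 ^ 3 / 36 * (1 - 5 / 2 / 16) := by
        have hsq : (1 - t / 2) ^ 2 ≤ (1 / 4) ^ 2 := sq_le_sq' (by linarith) (by linarith)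
        gcongr
    _ < -(1 / 10) := by norm_num
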